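/- Let N = 2 and let ρ : R² → [0,∞) be a C¹ function with compact support, P = Kρ^γ with K > 0 and γ > 1, and Φ(x) = g∫_{R²} log|x−y| ρ(y) dy with g > 0, satisfying ∇P(x) = −ρ(x)∇Φ(x) for all x. Then the total energy E = ∫ (P/(γ−1) + ½ρΦ) dx of this stationary solution equals gM²/(4(γ−1)) + (g/2)∫∫ ρ(x)ρ(y) log|x−y| dy dx, where M = ∫ ρ(x) dx. -/

import Mathlib

open MeasureTheory Real Filter
open scoped RealInnerProductSpace Topology

noncomputable section

/-- Euclidean space `ℝ^N`. -/
abbrev Euc (N : ℕ) := EuclideanSpace ℝ (Fin N)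

/-- Divergence of a vector field on `ℝ^N`. -/
def ediv {N : ℕ} (v : Euc N → Euc N) (x : Euc N) : ℝ :=
  ∑ i, fderiv ℝ (fun y => v y i) x (EuclideanSpace.single i 1)

/-- Partial derivative of a scalar field in the `i`-th coordinate direction. -/
def epartial {N : ℕ} (i : Fin N) (f : Euc N → ℝ) (x : Euc N) : ℝ :=
  fderiv ℝ f x (EuclideanSpace.single i 1)

/-- Green's function of the Poisson equation in `ℝ^N`:
`log |x|` for `N = 2` and `-|x|^(2-N)` for `N ≥ 3`. -/
def green (N : ℕ) (x : Euc N) : ℝ :=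
  if N = 2 then Real.log ‖x‖ else -(‖x‖ ^ ((2 : ℝ) - (N : ℝ)))

/-- Gravitational potential `Φ(t,x) = g ∫ G(x-y) ρ(t,y) dy`. -/
def potential (N : ℕ) (g : ℝ) (ρ : ℝ → Euc N → ℝ) (t : ℝ) (x : Euc N) : ℝ :=
  g * ∫ y, green N (x - y) * ρ t y

/-- A classical solution on `[0,T)` (with `T : EReal`, so `T = ⊤` means a global
solution) of the `N`-dimensional Euler–Poisson equations with pressure
`P = K ρ^γ`, damping constant `β` and gravitational constant `g`:
nonnegative `C¹` density `ρ`, `C¹` velocity `u`, with `ρ(t,·)` supported in a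
fixed bounded open set `Ω`, satisfying the continuity and momentum equations
pointwise. -/
structure IsEPSolution (N : ℕ) (K γ β g : ℝ) (Ω : Set (Euc N)) (T : EReal)
    (ρ : ℝ → Euc N → ℝ) (u : ℝ → Euc N → Euc N) : Prop where
  rho_nonneg : ∀ t x, 0 ≤ ρ t x
  rho_C1 : ContDiff ℝ 1 (fun p : ℝ × Euc N => ρ p.1 p.2)
  u_C1 : ContDiff ℝ 1 (fun p : ℝ × Euc N => u p.1 p.2)
  omega_open : IsOpen Ω
  omega_bounded : Bornology.IsBounded Ω
  support_subset : ∀ t : ℝ, 0 ≤ t → (t : EReal) < T → Function.support (ρ t) ⊆ Ω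
  continuity_eq : ∀ t : ℝ, 0 ≤ t → (t : EReal) < T → ∀ x : Euc N,
    deriv (fun s => ρ s x) t + ediv (fun y => ρ t y • u t y) x = 0
  momentum_eq : ∀ t : ℝ, 0 ≤ t → (t : EReal) < T → ∀ x : Euc N, ∀ j : Fin N,
    deriv (fun s => ρ s x * u s x j) t
      + (∑ i, epartial i (fun y => ρ t y * u t y i * u t y j) x)
      + epartial j (fun y => K * ρ t y ^ γ) x
      = -(ρ t x * epartial j (potential N g ρ t) x) - β * ρ t x * u t x j

/-- Total energy (case `γ > 1`):
`E(t) = ∫_Ω (½ ρ|u|² + P/(γ-1) + ½ ρΦ) dx` with `P = K ρ^γ`. -/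
def energy (N : ℕ) (K γ g : ℝ) (Ω : Set (Euc N)) (ρ : ℝ → Euc N → ℝ)
    (u : ℝ → Euc N → Euc N) (t : ℝ) : ℝ :=
  ∫ x in Ω, ((1 / 2) * ρ t x * ‖u t x‖ ^ 2 + K * ρ t x ^ γ / (γ - 1)
    + (1 / 2) * ρ t x * potential N g ρ t x)

/-- Isothermal total energy (case `γ = 1`, `P = Kρ`):
`E(t) = ∫_Ω (½ ρ|u|² + Kρ log ρ + ½ ρΦ) dx` (note `ρ log ρ = 0` where `ρ = 0`
since `Real.log 0 = 0`). -/
def energyIso (N : ℕ) (K g : ℝ) (Ω : Set (Euc N)) (ρ : ℝ → Euc N → ℝ)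
    (u : ℝ → Euc N → Euc N) (t : ℝ) : ℝ :=
  ∫ x in Ω, ((1 / 2) * ρ t x * ‖u t x‖ ^ 2 + K * ρ t x * Real.log (ρ t x)
    + (1 / 2) * ρ t x * potential N g ρ t x)

/-- Second inertia function `H(t) = ∫_Ω ρ(t,x)|x|² dx`. -/
def inertia (N : ℕ) (Ω : Set (Euc N)) (ρ : ℝ → Euc N → ℝ) (t : ℝ) : ℝ :=
  ∫ x in Ω, ρ t x * ‖x‖ ^ 2

/-- Maximal radius of the support of `ρ(t,·)`. -/
def maxRadius (N : ℕ) (ρ : ℝ → Euc N → ℝ) (t : ℝ) : ℝ :=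
  sSup ((fun x : Euc N => ‖x‖) '' Function.support (ρ t))

lemma locInt_log : LocallyIntegrable (fun z : Euc 2 => Real.log ‖z‖) volume := by
  intro x
  refine ⟨Metric.ball 0 (‖x‖ + 1), Metric.isOpen_ball.mem_nhds (by simp), ?_⟩
  have h := integrableOn_fun_norm_addHaar (volume : Measure (Euc 2)) (f := Real.log)
    (r := ‖x‖ + 1)
  rw [h]
  have h2 : IntegrableOn Real.log (Set.Icc 0 (‖x‖ + 1)) := by
    rw [integrableOn_Icc_iff_integrableOn_Ioc, ← intervalIntegrable_iff_integrableOn_Ioc_of_le (by positivity)]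
    exact intervalIntegral.intervalIntegrable_log'
  have h3 := h2.continuousOn_mul (g := fun y : ℝ => y ^ (Module.finrank ℝ (Euc 2) - 1))
    (by fun_prop) isCompact_Icc
  exact h3.mono_set Set.Ioo_subset_Icc_self

lemma int_w {w f : Euc 2 → ℝ} (hw : LocallyIntegrable w volume) (hf : Continuous f)
    (hs : HasCompactSupport f) : Integrable (fun z => w z * f z) volume := by
  simpa using hw.integrable_smul_right_of_hasCompactSupport hf hs

/-- Differentiating a dilation under the integral. -/
lemma hasDerivAt_dil {w f : Euc 2 → ℝ} (hw : LocallyIntegrable w volume) (hf : ContDiff ℝ 1 f)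
    (hs : HasCompactSupport f) :
    HasDerivAt (fun l : ℝ => ∫ z, w z * f (l • z)) (∫ z, w z * fderiv ℝ f z z) 1 := by
  have hdc : Continuous (fderiv ℝ f) := hf.continuous_fderiv one_ne_zero
  have hds : HasCompactSupport (fderiv ℝ f) := hs.fderiv ℝ
  obtain ⟨C, hC⟩ := hds.exists_bound_of_continuous hdc
  obtain ⟨R, hR⟩ := hds.isCompact.isBounded.subset_closedBall (0 : Euc 2)
  have hz : ∀ y : Euc 2, R < ‖y‖ → fderiv ℝ f y = 0 := by
    intro y hy
    by_contra hne
    have := hR (subset_tsupport _ (Function.mem_support.2 hne))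
    simp at this
    linarith
  have key := hasDerivAt_integral_of_dominated_loc_of_deriv_le (μ := (volume : Measure (Euc 2)))
    (F := fun (l : ℝ) z => w z * f (l • z)) (x₀ := (1 : ℝ))
    (F' := fun (l : ℝ) z => w z * fderiv ℝ f (l • z) z) (s := Set.Ioi (1 / 2))
    (bound := (Metric.closedBall (0 : Euc 2) (2 * |R|)).indicator
      (fun z => |w z| * (C * (2 * |R|))))
    (Ioi_mem_nhds (by norm_num)) ?_ ?_ ?_ ?_ ?_ ?_
  · simpa using key.2
  · refine Eventually.of_forall fun l => hw.aestronglyMeasurable.mul ?_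
    exact (hf.continuous.comp (continuous_const_smul l)).aestronglyMeasurable
  · simpa using int_w hw hf.continuous hs
  · refine hw.aestronglyMeasurable.mul ?_
    exact ((hdc.comp (continuous_const_smul (1:ℝ))).clm_apply continuous_id).aestronglyMeasurable
  · refine Eventually.of_forall fun z l hl => ?_
    simp only [Set.mem_Ioi] at hl
    by_cases hzz : z ∈ Metric.closedBall (0 : Euc 2) (2 * |R|)
    · rw [Set.indicator_of_mem hzz, norm_mul, Real.norm_eq_abs]
      gcongr
      have h1 := (fderiv ℝ f (l • z)).le_opNorm z
      simp at hzz
      have hC0 : 0 ≤ C := (norm_nonneg _).trans (hC 0)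
      exact h1.trans (mul_le_mul (hC _) hzz (norm_nonneg _) hC0)
    · rw [Set.indicator_of_notMem hzz]
      simp at hzz
      rw [hz (l • z)]
      · simp
      · rw [norm_smul, Real.norm_eq_abs, abs_of_pos (by linarith)]
        have := le_abs_self R
        have := norm_nonneg z
        nlinarith
  · rw [integrable_indicator_iff measurableSet_closedBall]
    have := hw.integrableOn_isCompact (isCompact_closedBall (0 : Euc 2) (2 * |R|))
    exact this.abs.mul_const _
  · refine Eventually.of_forall fun z l _ => ?_
    have h1 : HasFDerivAt f (fderiv ℝ f (l • z)) (l • z) :=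
      (hf.differentiable one_ne_zero _).hasFDerivAt
    have h2 : HasDerivAt (fun l : ℝ => l • z) z l := by
      simpa using (hasDerivAt_id l).smul_const z
    exact (h1.comp_hasDerivAt l h2).const_mul _

lemma dil_one {f : Euc 2 → ℝ} (hf : ContDiff ℝ 1 f) (hs : HasCompactSupport f) :
    ∫ z, fderiv ℝ f z z = -2 * ∫ z, f z := by
  have h := hasDerivAt_dil (w := fun _ => 1) (locallyIntegrable_const 1) hf hs
  simp only [one_mul] at h
  have h2 : HasDerivAt (fun l : ℝ => (l ^ 2)⁻¹ * ∫ z, f z) (-2 * ∫ z, f z) 1 := by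
    have := ((hasDerivAt_pow 2 (1 : ℝ)).inv (by norm_num)).mul_const (∫ z, f z)
    simpa using this
  refine h.unique (h2.congr_of_eventuallyEq ?_)
  refine Eventually.of_forall fun l => ?_
  simp only
  rw [Measure.integral_comp_smul]
  simp

lemma dil_log {f : Euc 2 → ℝ} (hf : ContDiff ℝ 1 f) (hs : HasCompactSupport f) :
    ∫ z, Real.log ‖z‖ * fderiv ℝ f z z = -2 * (∫ z, Real.log ‖z‖ * f z) - ∫ z, f z := by
  have h := hasDerivAt_dil locInt_log hf hs
  have h2 : HasDerivAt (fun l : ℝ => (l ^ 2)⁻¹ * ((∫ z, Real.log ‖z‖ * f z) - Real.log l * ∫ z, f z))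
      (-2 * (∫ z, Real.log ‖z‖ * f z) - ∫ z, f z) 1 := by
    have := ((hasDerivAt_pow 2 (1 : ℝ)).inv (by norm_num)).mul
      (((Real.hasDerivAt_log one_ne_zero).mul_const (∫ z, f z)).const_sub (∫ z, Real.log ‖z‖ * f z))
    refine HasDerivAt.congr_deriv this ?_
    simp
    try ring
  refine h.unique (h2.congr_of_eventuallyEq ?_)
  filter_upwards [Ioi_mem_nhds (show (0:ℝ) < 1 by norm_num)] with l hl
  simp only [Set.mem_Ioi] at hl
  have e : ∀ᵐ z : Euc 2, Real.log ‖z‖ * f (l • z)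
      = (fun y : Euc 2 => Real.log ‖y‖ * f y - Real.log l * f y) (l • z) := by
    have h0 : ∀ᵐ z : Euc 2, z ≠ 0 := by
      simp [ae_iff]
    filter_upwards [h0] with z hz
    simp only [norm_smul, Real.norm_eq_abs, abs_of_pos hl]
    rw [Real.log_mul hl.ne' (norm_ne_zero_iff.2 hz)]
    ring
  rw [integral_congr_ae e, Measure.integral_comp_smul volume
      (fun y : Euc 2 => Real.log ‖y‖ * f y - Real.log l * f y) l,
    integral_sub (int_w locInt_log hf.continuous hs)
    ((hf.continuous.integrable_of_hasCompactSupport hs).const_mul _), integral_const_mul]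
  simp

lemma conv_swap {a b : Euc 2 → ℝ} (ha : Continuous a) (has : HasCompactSupport a)
    (hb : Continuous b) (hbs : HasCompactSupport b) :
    ∫ x, a x * (∫ z, Real.log ‖z‖ * b (x - z)) = ∫ z, Real.log ‖z‖ * ∫ x, a x * b (x - z) := by
  obtain ⟨C, hC⟩ := hbs.exists_bound_of_continuous hb
  obtain ⟨R, hR⟩ := has.isCompact.isBounded.subset_closedBall (0 : Euc 2)
  obtain ⟨S, hS⟩ := hbs.isCompact.isBounded.subset_closedBall (0 : Euc 2)
  have hi : Integrable (Function.uncurry fun x z : Euc 2 => a x * (Real.log ‖z‖ * b (x - z)))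
      (volume.prod volume) := by
    have h1 : Integrable (fun x => |a x| * C) (volume : Measure (Euc 2)) :=
      (ha.integrable_of_hasCompactSupport has).abs.mul_const _
    have h2 : Integrable ((Metric.closedBall (0 : Euc 2) (R + S)).indicator
        (fun z => |Real.log ‖z‖|)) := by
      rw [integrable_indicator_iff measurableSet_closedBall]
      exact (locInt_log.integrableOn_isCompact (isCompact_closedBall _ _)).abs
    refine (h1.mul_prod h2).mono' ?_ ?_
    · apply Measurable.aestronglyMeasurable
      have := ha.measurable
      have := hb.measurable
      simp only [Function.uncurry_def]
      fun_prop
    · refine Eventually.of_forall fun p => ?_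
      obtain ⟨x, z⟩ := p
      simp only [Function.uncurry_apply_pair, norm_mul, Real.norm_eq_abs]
      by_cases hax : a x = 0
      · simp [hax]
      by_cases hbx : b (x - z) = 0
      · simp only [hbx, abs_zero, mul_zero]
        have hC0 : 0 ≤ C := (norm_nonneg _).trans (hC 0)
        have : 0 ≤ (Metric.closedBall (0 : Euc 2) (R + S)).indicator
            (fun z => |Real.log ‖z‖|) z := Set.indicator_nonneg (fun _ _ => abs_nonneg _) _
        positivity
      have h3 := hR (subset_tsupport _ (Function.mem_support.2 hax))
      have h4 := hS (subset_tsupport _ (Function.mem_support.2 hbx))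
      simp only [Metric.mem_closedBall, dist_zero_right] at h3 h4
      rw [Set.indicator_of_mem]
      · have := hC (x - z)
        rw [Real.norm_eq_abs] at this
        rw [mul_comm |Real.log ‖z‖|, ← mul_assoc]
        gcongr
      · simp only [Metric.mem_closedBall, dist_zero_right]
        calc ‖z‖ = ‖x - (x - z)‖ := by simp
          _ ≤ ‖x‖ + ‖x - z‖ := norm_sub_le _ _
          _ ≤ R + S := by linarith
  have := integral_integral_swap hi
  simp only [integral_const_mul] at this
  rw [this]
  congr 1
  ext z
  rw [← integral_const_mul]
  congr 1
  ext x
  ring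

lemma conv_symm {a b : Euc 2 → ℝ} (ha : Continuous a) (has : HasCompactSupport a)
    (hb : Continuous b) (hbs : HasCompactSupport b) :
    ∫ x, a x * (∫ z, Real.log ‖z‖ * b (x - z)) = ∫ x, b x * (∫ z, Real.log ‖z‖ * a (x - z)) := by
  rw [conv_swap ha has hb hbs, conv_swap hb hbs ha has]
  rw [← integral_neg_eq_self]
  congr 1
  ext z
  rw [norm_neg]
  congr 1
  rw [← integral_sub_right_eq_self (fun x => a x * b (x - -z)) z]
  congr 1
  ext x
  simp [mul_comm]

/-- For a 2-D hydrostatic equilibrium, the stationary total energy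
`E = ∫ (P/(γ-1) + ½ρΦ) dx` equals
`gM²/(4(γ-1)) + (g/2)∫∫ ρ(x)ρ(y) log|x-y| dy dx`. -/
theorem stationary_energy_2d (K γ g : ℝ) (hK : 0 < K) (hγ : 1 < γ) (hg : 0 < g)
    (ρ : Euc 2 → ℝ) (hρ : ContDiff ℝ 1 ρ) (hsupp : HasCompactSupport ρ)
    (hnn : ∀ x, 0 ≤ ρ x)
    (Φ : Euc 2 → ℝ) (hΦ : ∀ x, Φ x = g * ∫ y, Real.log ‖x - y‖ * ρ y)
    (hhyd : ∀ x, gradient (fun z => K * ρ z ^ γ) x = -(ρ x) • gradient Φ x) :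
    ∫ x, (K * ρ x ^ γ / (γ - 1) + (1 / 2) * ρ x * Φ x)
      = g * (∫ x, ρ x) ^ 2 / (4 * (γ - 1))
        + (g / 2) * ∫ x, ρ x * ∫ y, ρ y * Real.log ‖x - y‖ := by
  classical
  have hdc : Continuous (fderiv ℝ ρ) := hρ.continuous_fderiv one_ne_zero
  have hds : HasCompactSupport (fderiv ℝ ρ) := hsupp.fderiv ℝ
  set φ : Euc 2 → ℝ := fun x => ∫ z, Real.log ‖z‖ * ρ (x - z) with hφ
  have hconv : φ = MeasureTheory.convolution (fun z : Euc 2 => Real.log ‖z‖) ρ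
      (ContinuousLinearMap.mul ℝ ℝ) volume := rfl
  have hφ1 : ∀ x, φ x = ∫ y, Real.log ‖x - y‖ * ρ y := by
    intro x
    rw [hconv, convolution_eq_swap]
    rfl
  have hφC : ContDiff ℝ 1 φ := by
    rw [hconv]
    exact_mod_cast hsupp.contDiff_convolution_right (n := 1) _ locInt_log (by exact_mod_cast hρ)
  have hφd : ∀ x v, fderiv ℝ φ x v = ∫ z, Real.log ‖z‖ * fderiv ℝ ρ (x - z) v := by
    intro x v
    have h := hsupp.hasFDerivAt_convolution_right (ContinuousLinearMap.mul ℝ ℝ) locInt_log hρ x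
    rw [hconv, h.fderiv, convolution_precompR_apply _ locInt_log hds hdc]
    rfl
  have hΦφ : Φ = fun x => g * φ x := by
    ext x; rw [hΦ, hφ1]
  set q : Euc 2 → ℝ := fun y => fderiv ℝ ρ y y with hq
  have hqc : Continuous q := hdc.clm_apply continuous_id
  have hqs : HasCompactSupport q := by
    refine hds.mono ?_
    intro y hy hne
    exact hy (by simp [hq, hne])
  have hsh : ∀ x : Euc 2, ∀ {E : Type} [NormedAddCommGroup E] (f : Euc 2 → E),
      HasCompactSupport f → HasCompactSupport (fun z => f (x - z)) := by
    intro x E _ f hf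
    exact hf.comp_homeomorph (Homeomorph.subLeft x)
  -- pointwise virial identity
  have hpt : ∀ x, fderiv ℝ φ x x
      = (∫ z, Real.log ‖z‖ * q (x - z)) + 2 * φ x + ∫ y, ρ y := by
    intro x
    have hf : ContDiff ℝ 1 (fun z => ρ (x - z)) := hρ.comp (contDiff_const.sub contDiff_id)
    have h := dil_log hf (hsh x ρ hsupp)
    have hder : ∀ z, fderiv ℝ (fun z => ρ (x - z)) z z = - fderiv ℝ ρ (x - z) z := by
      intro z
      have h1 : HasFDerivAt ρ (fderiv ℝ ρ (x - z)) (x - z) :=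
        (hρ.differentiable one_ne_zero _).hasFDerivAt
      have h2 : HasFDerivAt (fun z : Euc 2 => x - z) (-ContinuousLinearMap.id ℝ (Euc 2)) z :=
        (hasFDerivAt_id z).const_sub x
      have h3 : HasFDerivAt (fun z => ρ (x - z)) _ z := h1.comp z h2
      rw [h3.fderiv]
      simp
    simp only [hder] at h
    rw [integral_sub_left_eq_self ρ volume x] at h
    have e : ∀ z, Real.log ‖z‖ * fderiv ℝ ρ (x - z) x
        = Real.log ‖z‖ * q (x - z) - Real.log ‖z‖ * -(fderiv ℝ ρ (x - z) z) := by
      intro z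
      simp only [hq, map_sub]
      ring
    have hc : Continuous (fun z => fderiv ℝ ρ (x - z) z) :=
      (hdc.comp (continuous_const.sub continuous_id)).clm_apply continuous_id
    have hcs : HasCompactSupport (fun z => fderiv ℝ ρ (x - z) z) := by
      refine (hsh x _ hds).mono ?_
      intro y hy hne
      simp only at hne
      exact hy (by simp [hne])
    rw [hφd, integral_congr_ae (Eventually.of_forall e), integral_sub, h]
    · simp only [hφ]; ring
    · exact int_w locInt_log (hqc.comp (continuous_const.sub continuous_id)) (hsh x q hqs)
    · exact int_w locInt_log hc.neg hcs.neg
  have hφc := hφC.continuous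
  have hdφ : Continuous (fun x => fderiv ℝ φ x x) :=
    (hφC.continuous_fderiv one_ne_zero).clm_apply continuous_id
  have I1 : Integrable (fun x => ρ x * fderiv ℝ φ x x) volume :=
    (hρ.continuous.mul hdφ).integrable_of_hasCompactSupport hsupp.mul_right
  have I2 : Integrable (fun x => ρ x * φ x) volume :=
    (hρ.continuous.mul hφc).integrable_of_hasCompactSupport hsupp.mul_right
  have I3 : Integrable ρ volume := hρ.continuous.integrable_of_hasCompactSupport hsupp
  have I4 : Integrable (fun x => q x * φ x) volume :=
    (hqc.mul hφc).integrable_of_hasCompactSupport hqs.mul_right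
  -- I = ∫ ρ x·∇φ
  have A1 : ∫ x, ρ x * fderiv ℝ φ x x
      = (∫ x, q x * φ x) + 2 * (∫ x, ρ x * φ x) + (∫ x, ρ x) ^ 2 := by
    have hs := conv_symm hρ.continuous hsupp hqc hqs
    have e : ∀ x, ρ x * (∫ z, Real.log ‖z‖ * q (x - z))
        = ρ x * fderiv ℝ φ x x - 2 * (ρ x * φ x) - ρ x * ∫ y, ρ y := by
      intro x; rw [hpt]; ring
    rw [integral_congr_ae (Eventually.of_forall e),
      integral_sub (f := fun x => ρ x * fderiv ℝ φ x x - 2 * (ρ x * φ x))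
        (I1.sub (I2.const_mul 2)) (I3.mul_const _), integral_sub I1 (I2.const_mul 2),
      integral_const_mul, integral_mul_const] at hs
    linarith [hs]
  have A2 : (∫ x, q x * φ x) + (∫ x, ρ x * fderiv ℝ φ x x) = -2 * ∫ x, ρ x * φ x := by
    rw [← dil_one (hρ.mul hφC) hsupp.mul_right, ← integral_add I4 I1]
    congr 1
    ext x
    have h1 := (hρ.differentiable one_ne_zero x).hasFDerivAt
    have h2 := (hφC.differentiable one_ne_zero x).hasFDerivAt
    have h3 : fderiv ℝ (fun i => ρ i * φ i) x = _ := (h1.mul h2).fderiv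
    rw [h3]
    simp [hq]
    ring
  have hP : ContDiff ℝ 1 (fun z => K * ρ z ^ γ) := by
    have : ContDiff ℝ 1 (fun x : ℝ => x ^ γ) := by
      exact_mod_cast Real.contDiff_rpow_const_of_le (n := 1) (p := γ) (by exact_mod_cast hγ.le)
    exact contDiff_const.mul (this.comp hρ)
  have hPs : HasCompactSupport (fun z => K * ρ z ^ γ) := by
    refine hsupp.mono ?_
    intro y hy hne
    exact hy (by simp [hne, Real.zero_rpow (by linarith : γ ≠ 0)])
  have A3 : -2 * ∫ x, K * ρ x ^ γ = -g * ∫ x, ρ x * fderiv ℝ φ x x := by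
    rw [← dil_one hP hPs, ← integral_const_mul]
    congr 1
    ext x
    have h1 := congrArg (fun v => inner ℝ v x) (hhyd x)
    have h2 : fderiv ℝ Φ x = g • fderiv ℝ φ x := by
      rw [hΦφ]
      exact fderiv_const_mul (hφC.differentiable one_ne_zero x) g
    simp only [gradient, inner_smul_left, InnerProductSpace.toDual_symm_apply] at h1
    rw [h1, h2]
    simp
    ring
  have A4 : ∫ x, K * ρ x ^ γ = g * (∫ x, ρ x) ^ 2 / 4 := by linear_combination (-1/2) * A3 + g/4 * (A1 + A2)
  have I5 : Integrable (fun x => K * ρ x ^ γ) volume :=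
    hP.continuous.integrable_of_hasCompactSupport hPs
  have e : ∀ x, K * ρ x ^ γ / (γ - 1) + (1 / 2) * ρ x * Φ x
      = K * ρ x ^ γ / (γ - 1) + (g / 2) * (ρ x * φ x) := by
    intro x; rw [hΦφ]; ring
  have e2 : ∀ x, (∫ y, ρ y * Real.log ‖x - y‖) = φ x := by
    intro x; rw [hφ1]; simp only [mul_comm]
  simp only [e, e2]
  rw [integral_add (I5.div_const _) (I2.const_mul _), integral_div, A4, integral_const_mul]
  have : γ - 1 ≠ 0 := by linarith
  field_simp
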